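/- For every classifier h ∈ H, the target error is bounded using the two-sided discrepancy: e_T(h) ≤ e_S(h) + disc_Γ(S,T) + λ, where disc_Γ(S,T) = sup_{h, h′ ∈ H} |dis_T(h′,h) − dis_S(h′,h)| and λ = inf_{h′ ∈ H} (e_S(h′) + e_T(h′)). -/

import Mathlib

/-!
The disparity `Gam` satisfies a triangle inequality on the simplex (`Gam_triangle`), because
`(1 - p k) * (1 - r k) ≥ 0` gives `p k + r k ≤ 1 + ∑ j, p j * r j` for every `k`, and this can be
averaged against `q`. Integrating, `dis D` satisfies the triangle inequality, so for any `h' ∈ H`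
`e_T(h) ≤ dis_T(h, h') + e_T(h') ≤ dis_S(h, h') + disc + e_T(h') ≤ e_S(h) + disc + e_S(h') + e_T(h')`,
and taking the infimum over `h'` finishes. The supremum is over a bounded set since
`0 ≤ dis ≤ 1`.
-/

open MeasureTheory

/-- Classifier determinacy disparity Γ(p,q) = ∑_{m≠n} p_m q_n = 1 − ∑_k p_k q_k. -/
noncomputable def Gam {K : ℕ} (p q : Fin K → ℝ) : ℝ := 1 - ∑ k, p k * q k

/-- Membership in the probability simplex Δ_K. -/
def inSimplex {K : ℕ} (p : Fin K → ℝ) : Prop := (∀ k, 0 ≤ p k) ∧ ∑ k, p k = 1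

/-- Expected determinacy disparity dis_D(h₁,h₂) = ∫ Γ(h₁(x), h₂(x)) dD(x). -/
noncomputable def dis {X : Type*} [MeasurableSpace X] {K : ℕ}
    (D : Measure X) (h₁ h₂ : X → Fin K → ℝ) : ℝ :=
  ∫ x, Gam (h₁ x) (h₂ x) ∂D

/-- Determinacy disparity discrepancy d_{h,H}(P,Q) = sup_{h'∈H} (dis_Q(h',h) − dis_P(h',h)). -/
noncomputable def ddd {X : Type*} [MeasurableSpace X] {K : ℕ}
    (H : Set (X → Fin K → ℝ)) (h : X → Fin K → ℝ) (P Q : Measure X) : ℝ :=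
  sSup {r | ∃ h' ∈ H, r = dis Q h' h - dis P h' h}

lemma inSimplex.le_one {K : ℕ} {p : Fin K → ℝ} (hp : inSimplex p) (k : Fin K) : p k ≤ 1 := by
  rw [← hp.2]
  exact Finset.single_le_sum (fun i _ => hp.1 i) (Finset.mem_univ k)

lemma Gam_le_one {K : ℕ} {p q : Fin K → ℝ} (hp : inSimplex p) (hq : inSimplex q) :
    Gam p q ≤ 1 := by
  have : 0 ≤ ∑ k, p k * q k := Finset.sum_nonneg fun k _ => mul_nonneg (hp.1 k) (hq.1 k)
  unfold Gam
  linarith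

lemma Gam_nonneg {K : ℕ} {p q : Fin K → ℝ} (hp : inSimplex p) (hq : inSimplex q) :
    0 ≤ Gam p q := by
  have : ∑ k, p k * q k ≤ ∑ k, p k :=
    Finset.sum_le_sum fun k _ => mul_le_of_le_one_right (hp.1 k) (hq.le_one k)
  unfold Gam
  linarith [hp.2]

lemma Gam_comm {K : ℕ} (p q : Fin K → ℝ) : Gam p q = Gam q p := by
  simp only [Gam, mul_comm]

lemma Gam_triangle {K : ℕ} {p q r : Fin K → ℝ} (hp : inSimplex p) (hq : inSimplex q)
    (hr : inSimplex r) : Gam p r ≤ Gam p q + Gam q r := by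
  have key : ∀ k, p k + r k ≤ 1 + ∑ j, p j * r j := by
    intro k
    have h1 : p k * r k ≤ ∑ j, p j * r j :=
      Finset.single_le_sum (f := fun j => p j * r j)
        (fun i _ => mul_nonneg (hp.1 i) (hr.1 i)) (Finset.mem_univ k)
    nlinarith [mul_nonneg (sub_nonneg.2 (hp.le_one k)) (sub_nonneg.2 (hr.le_one k))]
  have h2 : ∑ k, q k * (p k + r k) ≤ ∑ k, q k * (1 + ∑ j, p j * r j) :=
    Finset.sum_le_sum fun k _ => mul_le_mul_of_nonneg_left (key k) (hq.1 k)
  rw [← Finset.sum_mul, hq.2] at h2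
  simp only [mul_add, Finset.sum_add_distrib] at h2
  have h3 : ∑ k, p k * q k = ∑ k, q k * p k := by simp only [mul_comm]
  unfold Gam
  linarith

section dis

variable {X : Type*} [MeasurableSpace X] {K : ℕ} {D : Measure X} [IsProbabilityMeasure D]
  {f g u : X → Fin K → ℝ}

lemma integrable_Gam (hf : Measurable f) (hg : Measurable g) (hfs : ∀ x, inSimplex (f x))
    (hgs : ∀ x, inSimplex (g x)) : Integrable (fun x => Gam (f x) (g x)) D := by
  refine Integrable.of_bound (C := 1) (Measurable.aestronglyMeasurable ?_) (ae_of_all _ fun x => ?_)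
  · unfold Gam
    fun_prop
  · rw [Real.norm_eq_abs, abs_of_nonneg (Gam_nonneg (hfs x) (hgs x))]
    exact Gam_le_one (hfs x) (hgs x)

lemma dis_nonneg (hfs : ∀ x, inSimplex (f x)) (hgs : ∀ x, inSimplex (g x)) : 0 ≤ dis D f g :=
  integral_nonneg fun x => Gam_nonneg (hfs x) (hgs x)

lemma dis_le_one (hf : Measurable f) (hg : Measurable g) (hfs : ∀ x, inSimplex (f x))
    (hgs : ∀ x, inSimplex (g x)) : dis D f g ≤ 1 := by
  have := integral_mono (integrable_Gam (D := D) hf hg hfs hgs) (integrable_const (1 : ℝ))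
    fun x => Gam_le_one (hfs x) (hgs x)
  simpa [dis] using this

lemma dis_comm : dis D f g = dis D g f := by
  simp only [dis, Gam_comm]

lemma dis_triangle (hf : Measurable f) (hg : Measurable g) (hu : Measurable u)
    (hfs : ∀ x, inSimplex (f x)) (hgs : ∀ x, inSimplex (g x)) (hus : ∀ x, inSimplex (u x)) :
    dis D f u ≤ dis D f g + dis D g u := by
  unfold dis
  rw [← integral_add (integrable_Gam hf hg hfs hgs) (integrable_Gam hg hu hgs hus)]
  exact integral_mono (integrable_Gam hf hu hfs hus)
    ((integrable_Gam hf hg hfs hgs).add (integrable_Gam hg hu hgs hus))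
    fun x => Gam_triangle (hfs x) (hgs x) (hus x)

end dis

/-- e_T(h) ≤ e_S(h) + disc_Γ(S,T) + λ with the two-sided discrepancy
disc_Γ(S,T) = sup_{h,h'∈H} |dis_T(h',h) − dis_S(h',h)|. -/
theorem target_error_bound_two_sided {X : Type*} [MeasurableSpace X] (K : ℕ) (hK : 1 ≤ K)
    (H : Set (X → Fin K → ℝ)) (hHne : H.Nonempty)
    (hHm : ∀ h' ∈ H, Measurable h') (hHs : ∀ h' ∈ H, ∀ x, inSimplex (h' x))
    (S T : Measure X) [IsProbabilityMeasure S] [IsProbabilityMeasure T]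
    (yS yT : X → Fin K → ℝ) (hyS : Measurable yS) (hyT : Measurable yT)
    (hySs : ∀ x, inSimplex (yS x)) (hyTs : ∀ x, inSimplex (yT x))
    (h : X → Fin K → ℝ) (hh : h ∈ H) :
    dis T h yT ≤ dis S h yS +
      sSup {r | ∃ h₁ ∈ H, ∃ h₂ ∈ H, r = |dis T h₂ h₁ - dis S h₂ h₁|} +
      sInf {r | ∃ h' ∈ H, r = dis S h' yS + dis T h' yT} := by
  have hbdd : BddAbove {r | ∃ h₁ ∈ H, ∃ h₂ ∈ H, r = |dis T h₂ h₁ - dis S h₂ h₁|} := by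
    refine ⟨1, ?_⟩
    rintro r ⟨h₁, m₁, h₂, m₂, rfl⟩
    have a := dis_nonneg (D := T) (hHs h₂ m₂) (hHs h₁ m₁)
    have b := dis_nonneg (D := S) (hHs h₂ m₂) (hHs h₁ m₁)
    have c := dis_le_one (D := T) (hHm h₂ m₂) (hHm h₁ m₁) (hHs h₂ m₂) (hHs h₁ m₁)
    have d := dis_le_one (D := S) (hHm h₂ m₂) (hHm h₁ m₁) (hHs h₂ m₂) (hHs h₁ m₁)
    rw [abs_le]
    constructor <;> linarith
  rw [← sub_le_iff_le_add']
  obtain ⟨h₀, m₀⟩ := hHne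
  refine le_csInf ⟨_, h₀, m₀, rfl⟩ ?_
  rintro r ⟨h', m', rfl⟩
  have t₁ := dis_triangle (D := T) (hHm h hh) (hHm h' m') hyT (hHs h hh) (hHs h' m') hyTs
  have t₂ := dis_triangle (D := S) (hHm h hh) hyS (hHm h' m') (hHs h hh) hySs (hHs h' m')
  have t₃ := le_csSup hbdd ⟨h', m', h, hh, rfl⟩
  have t₄ := le_abs_self (dis T h h' - dis S h h')
  rw [dis_comm (f := yS)] at t₂
  linarith
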